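/- Fix integers d ≥ 3 and 2 ≤ j ≤ d−1 and let P = P(d,j) be the convex hull of 0, e₁,…,e_{d−1}, and e₁+⋯+e_j + j·e_d in ℝ^d. Then for every integer k with 1 ≤ k < j, the dilated polytope kP is not very ample. Combined with μ_Ehr(P) = j and the general inequalities, all six invariants μ_va, μ_midp, μ_idp, μ_Hilb, μ_hole, μ_Ehr of P equal j. -/

import Mathlib

open scoped BigOperators Pointwise

/-- Points of `ℝ^N`. -/
abbrev Pt (N : ℕ) := Fin N → ℝ

/-- A point has integer coordinates. -/
def IsLat {N : ℕ} (x : Pt N) : Prop := ∀ i, ∃ z : ℤ, x i = (z : ℝ)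

/-- Lattice points of a set. -/
def latPts {N : ℕ} (P : Set (Pt N)) : Set (Pt N) := {x ∈ P | IsLat x}

/-- The dilated polytope `kP`. -/
def dil {N : ℕ} (k : ℕ) (P : Set (Pt N)) : Set (Pt N) := (k : ℝ) • P

/-- `α` is a sum of `k` lattice points of `P`. -/
def DecomposesIn {N : ℕ} (P : Set (Pt N)) (k : ℕ) (α : Pt N) : Prop :=
  ∃ f : Fin k → Pt N, (∀ i, f i ∈ latPts P) ∧ α = ∑ i, f i

/-- The integer decomposition property. -/
def HasIDP {N : ℕ} (P : Set (Pt N)) : Prop :=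
  ∀ k : ℕ, 0 < k → ∀ α ∈ latPts (dil k P), DecomposesIn P k α

/-- Very ampleness: decomposition holds for all sufficiently large `k`. -/
def VeryAmple {N : ℕ} (P : Set (Pt N)) : Prop :=
  ∃ k₀ : ℕ, ∀ k, k₀ ≤ k → ∀ α ∈ latPts (dil k P), DecomposesIn P k α

/-- An integral convex polytope: the convex hull of finitely many lattice points
(which include all its vertices). -/
def IsIntegralPolytope {N : ℕ} (P : Set (Pt N)) : Prop :=
  ∃ V : Finset (Pt N), (∀ v ∈ V, IsLat v) ∧ P = convexHull ℝ (V : Set (Pt N))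

/-- Dimension of a polytope: the rank of the direction of its affine span. -/
noncomputable def polyDim {N : ℕ} (P : Set (Pt N)) : ℕ :=
  Module.finrank ℝ (affineSpan ℝ P).direction

/-- Lattice points of the cone `C(P) ⊂ ℝ^{N+1}` generated by `P̃ = P × {1}`;
a point of `ℝ^{N+1}` is represented as a pair `(x, deg)`. -/
def coneLat {N : ℕ} (P : Set (Pt N)) : Set (Pt N × ℝ) :=
  {p | (∃ (m : ℕ) (c : Fin m → ℝ) (w : Fin m → Pt N),
        (∀ i, 0 ≤ c i ∧ w i ∈ P) ∧ p.1 = ∑ i, c i • w i ∧ p.2 = ∑ i, c i)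
    ∧ IsLat p.1 ∧ ∃ z : ℤ, p.2 = (z : ℝ)}

/-- The monoid `ℤ_{≥0}(P̃ ∩ ℤ^{N+1})` generated by the degree-one lattice points of the cone. -/
def genMonoid {N : ℕ} (P : Set (Pt N)) : Set (Pt N × ℝ) :=
  {p | ∃ (m : ℕ) (f : Fin m → Pt N), (∀ i, f i ∈ latPts P) ∧
        p.1 = ∑ i, f i ∧ p.2 = (m : ℝ)}

/-- `H` is the minimal Hilbert basis of the cone `C(P)`. -/
def IsMinHilbertBasis {N : ℕ} (P : Set (Pt N)) (H : Set (Pt N × ℝ)) : Prop :=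
  (H.Finite ∧ H ⊆ coneLat P ∧
      coneLat P ⊆ (AddSubmonoid.closure H : Set (Pt N × ℝ))) ∧
  ∀ H' : Set (Pt N × ℝ),
    (H'.Finite ∧ H' ⊆ coneLat P ∧
      coneLat P ⊆ (AddSubmonoid.closure H' : Set (Pt N × ℝ))) → H ⊆ H'

/-- `v` lists the vertices of an empty `d`-simplex contained in `P`. -/
def EmptySimplexIn {N : ℕ} (P : Set (Pt N)) (d : ℕ) (v : Fin (d+1) → Pt N) : Prop :=
  (∀ i, v i ∈ latPts P) ∧ AffineIndependent ℝ v ∧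
    ∀ x ∈ convexHull ℝ (Set.range v), IsLat x → x ∈ Set.range v

/-- `Box(S)` of a simplex with vertex list `v`: lattice points
`Σ rᵢ (vᵢ, 1)` with `0 ≤ rᵢ < 1`. -/
def boxSimplex {N d : ℕ} (v : Fin (d+1) → Pt N) : Set (Pt N × ℝ) :=
  {p | ∃ r : Fin (d+1) → ℝ, (∀ i, 0 ≤ r i ∧ r i < 1) ∧
      p.1 = ∑ i, r i • v i ∧ p.2 = ∑ i, r i ∧ IsLat p.1 ∧ ∃ z : ℤ, p.2 = (z : ℝ)}

/-- `Box(P)`: holes of `P`, i.e. box points of empty `d`-simplices in `P` that are not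
nonnegative integer combinations of `P̃ ∩ ℤ^{N+1}`. -/
def boxP {N : ℕ} (P : Set (Pt N)) (d : ℕ) : Set (Pt N × ℝ) :=
  (⋃ v ∈ {v : Fin (d+1) → Pt N | EmptySimplexIn P d v}, boxSimplex v) \ genMonoid P

/-- Ehrhart counting function `|nP ∩ ℤ^N|`. -/
noncomputable def ehr {N : ℕ} (P : Set (Pt N)) (n : ℕ) : ℕ := (latPts (dil n P)).ncard

/-- The `δ`-vector of a `d`-dimensional polytope, via finite differences of the
Ehrhart counting function. -/
noncomputable def deltaVec {N : ℕ} (P : Set (Pt N)) (d i : ℕ) : ℤ :=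
  ∑ j ∈ Finset.range (i+1), (-1)^j * ((d+1).choose j) * (ehr P (i - j) : ℤ)

/-- Vertex set of the simplex `P(d,j)`: `0`, `e₁, …, e_{d-1}`, and
`e₁ + ⋯ + e_j + j·e_d`. -/
def Vdj (d j : ℕ) : Set (Pt d) :=
  {0} ∪ {x : Pt d | ∃ k : Fin d, (k : ℕ) < d - 1 ∧ x = fun l => if l = k then (1:ℝ) else 0}
    ∪ {(fun k => (if (k : ℕ) + 1 ≤ j then (1:ℝ) else 0) + (if (k : ℕ) = d - 1 then (j:ℝ) else 0) : Pt d)}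

/-- The simplex `P(d,j) ⊂ ℝ^d`. -/
def Pdj (d j : ℕ) : Set (Pt d) := convexHull ℝ (Vdj d j)

/-!
Write `v₀, …, v_d` for the vertices of `P = P(d,j)`. Every lattice point of the cone over `P` is,
uniquely, a box point `∑ rᵢ (vᵢ, 1)` with `0 ≤ rᵢ < 1` plus a nonnegative integer combination of the
`(vᵢ, 1)`. The last coefficient of a box point is `h / j`, where `h < j` is its height (its
coordinate along `e_d`), and integrality then determines the other ones; for `h > 0` the degree
is `j + 1 - h`. Hence all box points have degree at most `j`, and none has degree one.

* A lattice point of the cone of degree greater than `j` is not a box point, so it splits off a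
  vertex. This bounds all the decomposition invariants from above by `j`.
* The box point `e₁ + ⋯ + e_j + e_d` has height one and degree `j`, and every lattice point of the
  cone of height one has degree at least `j`. Heights are nonnegative integers, so a decomposition
  of a point of height one has a summand of height one. Hence this point is irreducible and, for
  `k < j`, is never a sum of `n` lattice points of `kP`, though it lies in `nkP` once `nk ≥ j`.
* Multiplying the Ehrhart series of a lattice simplex by `(1 - t)^{d+1}` leaves the generating
  function of its box points, so the last nonzero entry of the `δ`-vector is in degree `j`.
-/

section Lattice

variable {N : ℕ}

/-- The lattice `ℤ^{N+1}` in `ℝ^{N+1}`, whose points are represented as pairs `(x, deg)`. -/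
def liftedLattice (N : ℕ) : AddSubgroup (Pt N × ℝ) :=
  (AddSubgroup.pi Set.univ fun _ => (Int.castAddHom ℝ).range).prod (Int.castAddHom ℝ).range

lemma mem_liftedLattice {p : Pt N × ℝ} :
    p ∈ liftedLattice N ↔ IsLat p.1 ∧ ∃ z : ℤ, p.2 = z := by
  simp only [liftedLattice, AddSubgroup.mem_prod, AddSubgroup.mem_pi, AddMonoidHom.mem_range,
    Int.coe_castAddHom, Set.mem_univ, true_implies, IsLat, eq_comm]

lemma latPts_finite_of_isBounded {P : Set (Pt N)} (hP : Bornology.IsBounded P) :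
    (latPts P).Finite := by
  refine (ZSpan.setFinite_inter (Pi.basisFun ℝ (Fin N)) hP).subset fun x hx => ⟨hx.1, ?_⟩
  refine ((Pi.basisFun ℝ (Fin N)).mem_span_iff_repr_mem ℤ x).2 fun i => ?_
  obtain ⟨z, hz⟩ := hx.2 i
  exact ⟨z, by simp [hz]⟩

lemma dil_dil (a b : ℕ) (P : Set (Pt N)) : dil a (dil b P) = dil (a * b) P := by
  simp [dil, smul_smul]

end Lattice

section Cone

variable {N : ℕ} {P : Set (Pt N)}

lemma mem_liftedLattice_of_mem_coneLat {p : Pt N × ℝ} (hp : p ∈ coneLat P) :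
    p ∈ liftedLattice N :=
  mem_liftedLattice.2 hp.2

/-- The lattice points of the cone over `P`, as a monoid. -/
def latticeCone (P : Set (Pt N)) : AddSubmonoid (Pt N × ℝ) where
  carrier := coneLat P
  zero_mem' := ⟨⟨0, Fin.elim0, Fin.elim0, fun i => i.elim0, by simp, by simp⟩,
    mem_liftedLattice.1 (zero_mem _)⟩
  add_mem' {p q} hp hq := by
    have hlattice := mem_liftedLattice.1
      (add_mem (mem_liftedLattice_of_mem_coneLat hp) (mem_liftedLattice_of_mem_coneLat hq))
    obtain ⟨⟨m, c, w, hcw, hp₁, hp₂⟩, -⟩ := hp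
    obtain ⟨⟨m', c', w', hcw', hq₁, hq₂⟩, -⟩ := hq
    refine ⟨⟨m + m', Fin.append c c', Fin.append w w', fun i => ?_, ?_, ?_⟩, hlattice⟩
    · cases i using Fin.addCases with
      | left i => simpa using hcw i
      | right i => simpa using hcw' i
    · simp [Fin.sum_univ_add, hp₁, hq₁]
    · simp [Fin.sum_univ_add, hp₂, hq₂]

lemma zero_mem_coneLat : (0 : Pt N × ℝ) ∈ coneLat P := (latticeCone P).zero_mem

lemma add_mem_coneLat {p q : Pt N × ℝ} (hp : p ∈ coneLat P) (hq : q ∈ coneLat P) :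
    p + q ∈ coneLat P :=
  (latticeCone P).add_mem hp hq

lemma mk_one_mem_coneLat {x : Pt N} (hx : x ∈ latPts P) : (x, (1 : ℝ)) ∈ coneLat P :=
  ⟨⟨1, fun _ => 1, fun _ => x, fun _ => ⟨zero_le_one, hx.1⟩, by simp, by simp⟩, hx.2, 1, by simp⟩

lemma exists_nat_snd_eq_of_mem_coneLat {p : Pt N × ℝ} (hp : p ∈ coneLat P) :
    ∃ n : ℕ, p.2 = n := by
  obtain ⟨⟨m, c, w, hcw, -, hdeg⟩, -, z, hz⟩ := hp
  have hnonneg : (0 : ℝ) ≤ z := hz ▸ hdeg ▸ Finset.sum_nonneg fun i _ => (hcw i).1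
  lift z to ℕ using by exact_mod_cast hnonneg
  exact ⟨z, by simpa using hz⟩

lemma eq_zero_of_mem_coneLat_of_snd_eq_zero {p : Pt N × ℝ} (hp : p ∈ coneLat P)
    (hdeg : p.2 = 0) : p = 0 := by
  obtain ⟨⟨m, c, w, hcw, hp₁, hp₂⟩, -⟩ := hp
  have hc : ∀ i, c i = 0 := fun i =>
    (Finset.sum_eq_zero_iff_of_nonneg fun i _ => (hcw i).1).1 (hp₂ ▸ hdeg) i (Finset.mem_univ i)
  exact Prod.ext (by simp [hp₁, hc]) hdeg

lemma mem_latPts_dil_iff (hP : Convex ℝ P) (hne : P.Nonempty) {n : ℕ} {x : Pt N} :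
    x ∈ latPts (dil n P) ↔ (x, (n : ℝ)) ∈ coneLat P := by
  constructor
  · rintro ⟨⟨y, hy, rfl⟩, hlat⟩
    exact ⟨⟨1, fun _ => n, fun _ => y, fun _ => ⟨n.cast_nonneg, hy⟩, by simp, by simp⟩,
      hlat, n, by simp⟩
  · intro hx
    refine ⟨?_, hx.2.1⟩
    rcases n.eq_zero_or_pos with rfl | hn
    · obtain rfl : x = 0 :=
        congrArg Prod.fst (eq_zero_of_mem_coneLat_of_snd_eq_zero hx (by simp))
      obtain ⟨y, hy⟩ := hne
      exact ⟨y, hy, by simp⟩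
    · obtain ⟨⟨m, c, w, hcw, hx₁, hx₂⟩, -⟩ := hx
      have hpos : 0 < ∑ i, c i := hx₂ ▸ Nat.cast_pos.2 hn
      refine ⟨Finset.univ.centerMass c w,
        hP.centerMass_mem (fun i _ => (hcw i).1) hpos fun i _ => (hcw i).2, ?_⟩
      simp only [Finset.centerMass, ← hx₁, ← hx₂]
      exact smul_inv_smul₀ (Nat.cast_ne_zero.2 hn.ne') x

lemma finite_coneLat_snd_le (hP : Convex ℝ P) (hne : P.Nonempty) (hbdd : Bornology.IsBounded P)
    (s : ℕ) : {p ∈ coneLat P | p.2 ≤ s}.Finite := by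
  have hfin : (⋃ n ∈ Set.Iic s, latPts (dil n P) ×ˢ {(n : ℝ)}).Finite :=
    (Set.finite_Iic s).biUnion fun n _ =>
      (latPts_finite_of_isBounded (hbdd.smul₀ (n : ℝ))).prod (Set.finite_singleton _)
  refine hfin.subset ?_
  rintro ⟨x, t⟩ ⟨hp, hle⟩
  obtain ⟨n, rfl : t = n⟩ := exists_nat_snd_eq_of_mem_coneLat hp
  exact Set.mem_biUnion (Set.mem_Iic.2 (Nat.cast_le.1 hle))
    ⟨(mem_latPts_dil_iff hP hne).2 hp, rfl⟩

end Cone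

section Splitting

variable {N s : ℕ} {P : Set (Pt N)}

/-- Every lattice point of the cone over `P` of degree greater than `s` splits off a lattice point
of `P`. This bounds the decomposition invariants of `P` from above by `s`. -/
def SplitsAbove (P : Set (Pt N)) (s : ℕ) : Prop :=
  ∀ p ∈ coneLat P, (s : ℝ) < p.2 → ∃ v ∈ latPts P, p - (v, 1) ∈ coneLat P

lemma SplitsAbove.exists_add_eq (h : SplitsAbove P s) {n : ℕ} (hn : s ≤ n) (k : ℕ) {x : Pt N}
    (hx : (x, ((n + k : ℕ) : ℝ)) ∈ coneLat P) :
    ∃ y z, (y, (n : ℝ)) ∈ coneLat P ∧ (z, (k : ℝ)) ∈ coneLat P ∧ x = y + z := by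
  induction k generalizing x with
  | zero => exact ⟨x, 0, hx, by rw [Nat.cast_zero]; exact zero_mem_coneLat, by simp⟩
  | succ k ih =>
    obtain ⟨v, hv, hsplit⟩ := h _ hx (by dsimp only; norm_cast; lia)
    obtain ⟨y, z, hy, hz, hyz⟩ := ih (x := x - v) (by simpa [← add_assoc] using hsplit)
    refine ⟨y, z + v, hy, ?_, by rw [← add_assoc, ← hyz, sub_add_cancel]⟩
    simpa using add_mem_coneLat hz (mk_one_mem_coneLat hv)

lemma decomposesIn_one {x : Pt N} (hx : x ∈ latPts P) : DecomposesIn P 1 x :=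
  ⟨fun _ => x, fun _ => hx, by simp⟩

lemma DecomposesIn.add {k : ℕ} {x y : Pt N} (hx : DecomposesIn P k x) (hy : y ∈ latPts P) :
    DecomposesIn P (k + 1) (x + y) := by
  obtain ⟨f, hf, rfl⟩ := hx
  refine ⟨Fin.snoc f y, fun i => ?_, by simp [Fin.sum_univ_castSucc]⟩
  cases i using Fin.lastCases with
  | last => simpa using hy
  | cast i => simpa using hf i

lemma SplitsAbove.hasIDP_dil (h : SplitsAbove P s) (hP : Convex ℝ P) (hne : P.Nonempty) {n : ℕ}
    (hn : s ≤ n) : HasIDP (dil n P) := by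
  intro k (hk : 1 ≤ k)
  induction k, hk using Nat.le_induction with
  | base =>
    intro x hx
    rw [dil_dil, one_mul] at hx
    exact decomposesIn_one hx
  | succ k hk ih =>
    intro x hx
    rw [dil_dil, add_one_mul, mem_latPts_dil_iff hP hne] at hx
    obtain ⟨y, z, hy, hz, rfl⟩ := h.exists_add_eq (hn.trans (Nat.le_mul_of_pos_left n hk)) n hx
    rw [← mem_latPts_dil_iff hP hne] at hy hz
    exact (ih y (by rwa [dil_dil])).add hz

lemma SplitsAbove.coneLat_subset_closure (h : SplitsAbove P s) (hs : 1 ≤ s) :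
    coneLat P ⊆ AddSubmonoid.closure {p ∈ coneLat P | p.2 ≤ s} := by
  rintro ⟨x, t⟩ hp
  obtain ⟨n, rfl : t = n⟩ := exists_nat_snd_eq_of_mem_coneLat hp
  induction n generalizing x with
  | zero => exact AddSubmonoid.subset_closure ⟨hp, by simp⟩
  | succ n ih =>
    by_cases hle : n + 1 ≤ s
    · exact AddSubmonoid.subset_closure ⟨hp, Nat.cast_le.2 hle⟩
    · obtain ⟨v, hv, hsplit⟩ := h _ hp (Nat.cast_lt.2 (not_le.1 hle))
      have hrest := ih (x - v) (by simpa using hsplit)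
      have hvertex : (v, (1 : ℝ)) ∈ AddSubmonoid.closure {p ∈ coneLat P | p.2 ≤ s} :=
        AddSubmonoid.subset_closure ⟨mk_one_mem_coneLat hv, Nat.one_le_cast.2 hs⟩
      simpa using add_mem hrest hvertex

lemma SplitsAbove.snd_le_of_mem_minHilbertBasis (h : SplitsAbove P s) (hs : 1 ≤ s)
    (hP : Convex ℝ P) (hne : P.Nonempty) (hbdd : Bornology.IsBounded P) {H : Set (Pt N × ℝ)}
    (hH : IsMinHilbertBasis P H) {p : Pt N × ℝ} (hp : p ∈ H) : p.2 ≤ s :=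
  (hH.2 {p ∈ coneLat P | p.2 ≤ s}
    ⟨finite_coneLat_snd_le hP hne hbdd s, fun _ hp => hp.1, h.coneLat_subset_closure hs⟩ hp).2

end Splitting

section HeightOne

lemma mem_of_isAddIndecomposable_of_mem_closure {M : Type*} [AddMonoid M] {S : AddSubmonoid M}
    {H : Set M} {x : M} (hx : IsAddIndecomposable id (S : Set M) x) (hx₀ : x ≠ 0)
    (hH : H ⊆ S) (hxH : x ∈ AddSubmonoid.closure H) : x ∈ H := by
  induction hxH using AddSubmonoid.closure_induction with
  | mem x hmem => exact hmem
  | zero => exact absurd rfl hx₀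
  | add a b ha hb iha ihb =>
    have hle : AddSubmonoid.closure H ≤ S := AddSubmonoid.closure_le.2 hH
    rcases hx.2 a (hle ha) b (hle hb) rfl with rfl | rfl
    · simp only [zero_add] at *
      exact ihb hx hx₀
    · simp only [add_zero] at *
      exact iha hx hx₀

variable {N s : ℕ} {P : Set (Pt N)} {i : Fin N}

lemma exists_nat_apply_eq_of_mem_coneLat (hnonneg : ∀ x ∈ P, 0 ≤ x i) {p : Pt N × ℝ}
    (hp : p ∈ coneLat P) : ∃ n : ℕ, p.1 i = n := by
  obtain ⟨⟨m, c, w, hcw, hp₁, -⟩, hlat, -⟩ := hp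
  obtain ⟨z, hz⟩ := hlat i
  have hz₀ : (0 : ℝ) ≤ z := by
    simp only [← hz, hp₁, Finset.sum_apply, Pi.smul_apply, smul_eq_mul]
    exact Finset.sum_nonneg fun k _ => mul_nonneg (hcw k).1 (hnonneg _ (hcw k).2)
  lift z to ℕ using by exact_mod_cast hz₀
  exact ⟨z, by simpa using hz⟩

-- Heights add up and are natural numbers, so one summand of a height-one sum has height one.
lemma isAddIndecomposable_coneLat_of_apply_eq_one (hnonneg : ∀ x ∈ P, 0 ≤ x i)
    (hdeg : ∀ p ∈ coneLat P, p.1 i = 1 → (s : ℝ) ≤ p.2) {x : Pt N}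
    (hx : (x, (s : ℝ)) ∈ coneLat P) (hxi : x i = 1) :
    IsAddIndecomposable id (coneLat P) (x, (s : ℝ)) := by
  refine ⟨hx, fun p hp q hq hpq => ?_⟩
  simp only [id] at hpq ⊢
  obtain ⟨a, ha⟩ := exists_nat_apply_eq_of_mem_coneLat hnonneg hp
  obtain ⟨b, hb⟩ := exists_nat_apply_eq_of_mem_coneLat hnonneg hq
  obtain ⟨k, hk⟩ := exists_nat_snd_eq_of_mem_coneLat hp
  obtain ⟨l, hl⟩ := exists_nat_snd_eq_of_mem_coneLat hq
  have hheight : a + b = 1 := by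
    have := congrFun (congrArg Prod.fst hpq) i
    simp only [Prod.fst_add, Pi.add_apply, hxi, ha, hb] at this
    exact_mod_cast this.symm
  have hdegree : k + l = s := by
    have := congrArg Prod.snd hpq
    simp only [Prod.snd_add, hk, hl] at this
    exact_mod_cast this.symm
  rcases Nat.add_eq_one_iff.1 hheight with ⟨-, rfl⟩ | ⟨rfl, -⟩
  · have hsl : s ≤ l := by simpa [hl] using hdeg q hq (by simpa using hb)
    exact .inl (eq_zero_of_mem_coneLat_of_snd_eq_zero hp (by rw [hk]; norm_cast; lia))
  · have hsk : s ≤ k := by simpa [hk] using hdeg p hp (by simpa using ha)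
    exact .inr (eq_zero_of_mem_coneLat_of_snd_eq_zero hq (by rw [hl]; norm_cast; lia))

lemma IsMinHilbertBasis.mem_of_isAddIndecomposable {H : Set (Pt N × ℝ)}
    (hH : IsMinHilbertBasis P H) {p : Pt N × ℝ} (hp : IsAddIndecomposable id (coneLat P) p)
    (hp₀ : p ≠ 0) : p ∈ H :=
  mem_of_isAddIndecomposable_of_mem_closure (S := latticeCone P) hp hp₀ hH.1.2.1 (hH.1.2.2 hp.1)

lemma not_decomposesIn_dil_of_apply_eq_one (hP : Convex ℝ P) (hne : P.Nonempty)
    (hnonneg : ∀ x ∈ P, 0 ≤ x i) (hdeg : ∀ p ∈ coneLat P, p.1 i = 1 → (s : ℝ) ≤ p.2)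
    {x : Pt N} (hxi : x i = 1) {k : ℕ} (hk : k < s) (n : ℕ) : ¬ DecomposesIn (dil k P) n x := by
  rintro ⟨f, hf, rfl⟩
  have hcone : ∀ l, (f l, (k : ℝ)) ∈ coneLat P := fun l => (mem_latPts_dil_iff hP hne).1 (hf l)
  choose a ha using fun l => exists_nat_apply_eq_of_mem_coneLat hnonneg (hcone l)
  replace ha : ∀ l, f l i = a l := ha
  have hsum : ∑ l, a l = 1 := by
    simp only [Finset.sum_apply, ha] at hxi
    exact_mod_cast hxi
  obtain ⟨l, -, hl⟩ := Finset.exists_ne_zero_of_sum_ne_zero (hsum.trans_ne one_ne_zero)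
  have hle : a l ≤ 1 := hsum ▸ Finset.single_le_sum_of_canonicallyOrdered (Finset.mem_univ l)
  have hsk := hdeg _ (hcone l) (by simp [ha, show a l = 1 by lia])
  exact hk.not_ge (Nat.cast_le.1 hsk)

lemma not_veryAmple_dil_of_apply_eq_one (hP : Convex ℝ P) (hzero : 0 ∈ P)
    (hnonneg : ∀ x ∈ P, 0 ≤ x i) (hdeg : ∀ p ∈ coneLat P, p.1 i = 1 → (s : ℝ) ≤ p.2)
    {x : Pt N} (hx : (x, (s : ℝ)) ∈ coneLat P) (hxi : x i = 1) {k : ℕ} (hk₀ : 0 < k)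
    (hk : k < s) : ¬ VeryAmple (dil k P) := by
  rintro ⟨k₀, hdecomp⟩
  have hne : P.Nonempty := ⟨0, hzero⟩
  have hzero_lat : (0 : Pt N) ∈ latPts P := ⟨hzero, fun _ => ⟨0, by simp⟩⟩
  obtain ⟨t, ht⟩ : ∃ t, (k₀ + s) * k = s + t :=
    Nat.exists_eq_add_of_le ((Nat.le_add_left s k₀).trans (Nat.le_mul_of_pos_right _ hk₀))
  have hmem : x ∈ latPts (dil (k₀ + s) (dil k P)) := by
    rw [dil_dil, mem_latPts_dil_iff hP hne, ht]
    have hmultiple : t • ((0 : Pt N), (1 : ℝ)) ∈ coneLat P :=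
      (latticeCone P).nsmul_mem (mk_one_mem_coneLat hzero_lat) t
    simpa using add_mem_coneLat hx hmultiple
  exact not_decomposesIn_dil_of_apply_eq_one hP hne hnonneg hdeg hxi hk _
    (hdecomp _ (Nat.le_add_right k₀ s) x hmem)

lemma notMem_genMonoid_of_apply_eq_one (hP : Convex ℝ P) (hne : P.Nonempty)
    (hnonneg : ∀ x ∈ P, 0 ≤ x i) (hdeg : ∀ p ∈ coneLat P, p.1 i = 1 → (s : ℝ) ≤ p.2)
    (hs : 1 < s) {p : Pt N × ℝ} (hp : p.1 i = 1) : p ∉ genMonoid P := by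
  rintro ⟨n, f, hf, hsum, -⟩
  refine not_decomposesIn_dil_of_apply_eq_one hP hne hnonneg hdeg hp hs n ⟨f, ?_, hsum⟩
  simpa [dil] using hf

end HeightOne

section ConeCombination

variable {ι : Type*} [Fintype ι] {N : ℕ} {v : ι → Pt N}

/-- The point `∑ᵢ cᵢ (vᵢ, 1)` of `ℝ^{N+1}`, as a linear function of the coefficients `c`. -/
noncomputable def coneComb (v : ι → Pt N) : (ι → ℝ) →ₗ[ℝ] Pt N × ℝ :=
  Fintype.linearCombination ℝ fun i => (v i, (1 : ℝ))

lemma coneComb_fst (c : ι → ℝ) : (coneComb v c).1 = ∑ i, c i • v i := by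
  simp [coneComb, Fintype.linearCombination_apply, Prod.fst_sum]

lemma coneComb_snd (c : ι → ℝ) : (coneComb v c).2 = ∑ i, c i := by
  simp [coneComb, Fintype.linearCombination_apply, Prod.snd_sum]

lemma coneComb_single_one [DecidableEq ι] (i : ι) : coneComb v (Pi.single i 1) = (v i, 1) := by
  simp [coneComb]

lemma coneComb_comp_equiv {κ : Type*} [Fintype κ] (σ : κ ≃ ι) (c : ι → ℝ) :
    coneComb (v ∘ σ) (c ∘ σ) = coneComb v c := by
  simp only [coneComb, Fintype.linearCombination_apply, Function.comp_apply]
  exact σ.sum_comp fun i => c i • (v i, (1 : ℝ))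

lemma affineIndependent_iff_injective_coneComb :
    AffineIndependent ℝ v ↔ Function.Injective (coneComb v) := by
  simp only [affineIndependent_iff_of_fintype, injective_iff_map_eq_zero, Prod.ext_iff,
    coneComb_fst, coneComb_snd, Prod.fst_zero, Prod.snd_zero, funext_iff, Pi.zero_apply]
  refine forall_congr' fun c => ⟨fun h ⟨hfst, hsnd⟩ => h hsnd ?_, fun h hsum hvsub => h ⟨?_, hsum⟩⟩
  · rwa [Finset.weightedVSub_eq_linear_combination _ hsnd]
  · rwa [Finset.weightedVSub_eq_linear_combination _ hsum] at hvsub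

lemma exists_coneComb_eq_of_mem_convexHull {x : Pt N} (hx : x ∈ convexHull ℝ (Set.range v)) :
    ∃ c, 0 ≤ c ∧ coneComb v c = (x, 1) := by
  classical
  refine convexHull_min (t := {x | ∃ c, 0 ≤ c ∧ coneComb v c = (x, 1)}) ?_ ?_ hx
  · rintro _ ⟨i, rfl⟩
    exact ⟨Pi.single i 1, Pi.single_nonneg.2 zero_le_one, coneComb_single_one i⟩
  · rintro x ⟨c, hc, hcx⟩ y ⟨c', hc', hcy⟩ a b ha hb hab
    refine ⟨a • c + b • c', add_nonneg (smul_nonneg ha hc) (smul_nonneg hb hc'), ?_⟩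
    simp [hcx, hcy, hab]

lemma mem_coneLat_convexHull_range_iff {p : Pt N × ℝ} :
    p ∈ coneLat (convexHull ℝ (Set.range v)) ↔
      (∃ c, 0 ≤ c ∧ coneComb v c = p) ∧ p ∈ liftedLattice N := by
  constructor
  · intro hp
    refine ⟨?_, mem_liftedLattice_of_mem_coneLat hp⟩
    obtain ⟨⟨m, t, w, htw, hp₁, hp₂⟩, -⟩ := hp
    choose c hc hcw using fun k => exists_coneComb_eq_of_mem_convexHull (htw k).2
    refine ⟨∑ k, t k • c k, Finset.sum_nonneg fun k _ => smul_nonneg (htw k).1 (hc k), ?_⟩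
    ext <;> simp [hcw, hp₁, hp₂, Prod.fst_sum, Prod.snd_sum]
  · rintro ⟨⟨c, hc, rfl⟩, hlat⟩
    let e := Fintype.equivFin ι
    refine ⟨⟨_, c ∘ e.symm, v ∘ e.symm,
      fun k => ⟨hc _, subset_convexHull ℝ _ (Set.mem_range_self _)⟩, ?_, ?_⟩,
      mem_liftedLattice.1 hlat⟩
    · rw [coneComb_fst]
      exact (e.symm.sum_comp fun i => c i • v i).symm
    · rw [coneComb_snd]
      exact (e.symm.sum_comp c).symm

lemma coneComb_intCast_mem_liftedLattice (hv : ∀ i, IsLat (v i)) (a : ι → ℤ) :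
    coneComb v (fun i => a i) ∈ liftedLattice N := by
  simp only [coneComb, Fintype.linearCombination_apply, Int.cast_smul_eq_zsmul]
  exact sum_mem fun i _ => zsmul_mem (mem_liftedLattice.2 ⟨hv i, 1, by simp⟩) (a i)

lemma coneComb_natCast_mem_coneLat (hv : ∀ i, IsLat (v i)) (a : ι → ℕ) :
    coneComb v (fun i => a i) ∈ coneLat (convexHull ℝ (Set.range v)) :=
  mem_coneLat_convexHull_range_iff.2 ⟨⟨_, fun i => (a i).cast_nonneg, rfl⟩,
    by simpa using coneComb_intCast_mem_liftedLattice hv fun i => (a i : ℤ)⟩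

end ConeCombination

section Box

variable {N d : ℕ} {v : Fin (d + 1) → Pt N}

lemma mem_boxSimplex_iff {p : Pt N × ℝ} :
    p ∈ boxSimplex v ↔
      (∃ r, (∀ i, 0 ≤ r i ∧ r i < 1) ∧ coneComb v r = p) ∧ p ∈ liftedLattice N := by
  simp only [boxSimplex, Set.mem_ofPred_eq, mem_liftedLattice, Prod.ext_iff, coneComb_fst,
    coneComb_snd, @eq_comm _ p.1, @eq_comm _ p.2]
  tauto

lemma boxSimplex_subset_coneLat : boxSimplex v ⊆ coneLat (convexHull ℝ (Set.range v)) := by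
  intro p hp
  obtain ⟨⟨r, hr, hrp⟩, hlat⟩ := mem_boxSimplex_iff.1 hp
  exact mem_coneLat_convexHull_range_iff.2 ⟨⟨r, fun i => (hr i).1, hrp⟩, hlat⟩

lemma boxSimplex_comp_equiv (σ : Fin (d + 1) ≃ Fin (d + 1)) :
    boxSimplex (v ∘ σ) = boxSimplex v := by
  ext p
  rw [mem_boxSimplex_iff, mem_boxSimplex_iff,
    (σ.injective.surjective_comp_right (γ := ℝ)).exists]
  simp only [coneComb_comp_equiv, Function.comp_apply]
  refine and_congr_left' (exists_congr fun r => and_congr_left' ?_)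
  exact σ.forall_congr_right (q := fun i => 0 ≤ r i ∧ r i < 1)

lemma exists_boxSimplex_add_eq_of_mem_coneLat (hv : ∀ i, IsLat (v i)) {p : Pt N × ℝ}
    (hp : p ∈ coneLat (convexHull ℝ (Set.range v))) :
    ∃ q ∈ boxSimplex v, ∃ a : Fin (d + 1) → ℕ, p = q + coneComb v fun i => a i := by
  obtain ⟨⟨c, hc, rfl⟩, hlat⟩ := mem_coneLat_convexHull_range_iff.1 hp
  have hsplit : coneComb v c =
      coneComb v (fun i => Int.fract (c i)) + coneComb v (fun i => ⌊c i⌋₊) := by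
    rw [← map_add]
    congr 1
    ext i
    simp [natCast_floor_eq_intCast_floor (hc i), Int.fract_add_floor]
  refine ⟨_, mem_boxSimplex_iff.2 ⟨⟨_, fun i => ⟨Int.fract_nonneg _, Int.fract_lt_one _⟩, rfl⟩, ?_⟩,
    _, hsplit⟩
  have hfloor := mem_liftedLattice_of_mem_coneLat (coneComb_natCast_mem_coneLat hv (⌊c ·⌋₊))
  exact (add_mem_cancel_right hfloor).1 (hsplit ▸ hlat)

lemma boxSimplex_add_coneComb_injective (hind : AffineIndependent ℝ v) {q q' : Pt N × ℝ}
    (hq : q ∈ boxSimplex v) (hq' : q' ∈ boxSimplex v) {a a' : Fin (d + 1) → ℕ}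
    (h : q + coneComb v (fun i => a i) = q' + coneComb v (fun i => a' i)) : q = q' ∧ a = a' := by
  obtain ⟨⟨r, hr, rfl⟩, -⟩ := mem_boxSimplex_iff.1 hq
  obtain ⟨⟨r', hr', rfl⟩, -⟩ := mem_boxSimplex_iff.1 hq'
  rw [← map_add, ← map_add] at h
  have hcoeff := congrFun (affineIndependent_iff_injective_coneComb.1 hind h)
  have ha : a = a' := funext fun i => by
    have hfloor := congrArg Nat.floor (hcoeff i)
    simpa [Nat.floor_add_natCast, (hr i).1, (hr' i).1, Nat.floor_eq_zero.2 (hr i).2,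
      Nat.floor_eq_zero.2 (hr' i).2] using hfloor
  subst ha
  exact ⟨congrArg _ (funext fun i => by simpa using hcoeff i), rfl⟩

lemma mem_boxSimplex_or_exists_sub_mem_coneLat (hv : ∀ i, IsLat (v i)) {p : Pt N × ℝ}
    (hp : p ∈ coneLat (convexHull ℝ (Set.range v))) :
    p ∈ boxSimplex v ∨ ∃ i, p - (v i, 1) ∈ coneLat (convexHull ℝ (Set.range v)) := by
  obtain ⟨q, hq, a, rfl⟩ := exists_boxSimplex_add_eq_of_mem_coneLat hv hp
  by_cases ha : a = 0
  · left
    simpa [ha, ← Pi.zero_def] using hq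
  · right
    obtain ⟨i, hi⟩ := Function.ne_iff.1 ha
    refine ⟨i, ?_⟩
    have hle : Pi.single i 1 ≤ a :=
      update_le_iff.2 ⟨Nat.one_le_iff_ne_zero.2 hi, fun _ _ => Nat.zero_le _⟩
    obtain ⟨b, rfl⟩ := exists_add_of_le hle
    have hcast : (fun l => (((Pi.single i 1 + b : Fin (d + 1) → ℕ) l : ℕ) : ℝ)) =
        Pi.single i 1 + fun l => (b l : ℝ) := by
      ext l
      simp [Pi.single_apply]
    rw [hcast, map_add, coneComb_single_one, add_left_comm, add_sub_cancel_left]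
    exact add_mem_coneLat (boxSimplex_subset_coneLat hq) (coneComb_natCast_mem_coneLat hv b)

lemma splitsAbove_of_forall_boxSimplex_snd_le (hv : ∀ i, IsLat (v i)) {s : ℕ}
    (hs : ∀ q ∈ boxSimplex v, q.2 ≤ s) : SplitsAbove (convexHull ℝ (Set.range v)) s := by
  intro p hp hdeg
  rcases mem_boxSimplex_or_exists_sub_mem_coneLat hv hp with hbox | ⟨i, hi⟩
  · exact absurd (hs p hbox) hdeg.not_ge
  · exact ⟨v i, ⟨subset_convexHull ℝ _ (Set.mem_range_self i), hv i⟩, hi⟩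

end Box

section EmptySimplex

variable {N d : ℕ} {v : Fin (d + 1) → Pt N}

lemma latPts_convexHull_range_of_forall_boxSimplex_snd_ne_one (hv : ∀ i, IsLat (v i))
    (hbox : ∀ q ∈ boxSimplex v, q.2 ≠ 1) :
    latPts (convexHull ℝ (Set.range v)) = Set.range v := by
  refine Set.Subset.antisymm (fun x hx => ?_) ?_
  · rcases mem_boxSimplex_or_exists_sub_mem_coneLat hv (mk_one_mem_coneLat hx) with hmem | ⟨i, hi⟩
    · exact absurd rfl (hbox _ hmem)
    · have hzero := eq_zero_of_mem_coneLat_of_snd_eq_zero hi (by simp)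
      exact ⟨i, (sub_eq_zero.1 (congrArg Prod.fst hzero)).symm⟩
  · rintro _ ⟨i, rfl⟩
    exact ⟨subset_convexHull ℝ _ (Set.mem_range_self i), hv i⟩

lemma boxP_convexHull_range (hind : AffineIndependent ℝ v)
    (hempty : latPts (convexHull ℝ (Set.range v)) = Set.range v) :
    boxP (convexHull ℝ (Set.range v)) d =
      boxSimplex v \ genMonoid (convexHull ℝ (Set.range v)) := by
  refine congrArg (· \ _) (Set.Subset.antisymm (Set.iUnion₂_subset ?_) ?_)
  · rintro w ⟨hw, hwind, -⟩
    choose σ hσ using fun i => hempty.subset (hw i)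
    have hσinj : Function.Injective σ := fun i k hik =>
      hwind.injective (by rw [← hσ, ← hσ, hik])
    obtain rfl : v ∘ Equiv.ofBijective σ (Finite.injective_iff_bijective.1 hσinj) = w := funext hσ
    rw [boxSimplex_comp_equiv]
  · exact Set.subset_biUnion_of_mem (u := boxSimplex)
      ⟨fun i => hempty.superset (Set.mem_range_self i), hind,
        fun x hx hlat => hempty.subset ⟨hx, hlat⟩⟩

end EmptySimplex

section Ehrhart

open Finset.HasAntidiagonal (antidiagonal mem_antidiagonal)

lemma card_piAntidiag_univ_fin (d n : ℕ) :
    (Finset.piAntidiag (Finset.univ : Finset (Fin (d + 1))) n).card = (d + n).choose d := by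
  rw [← Finset.map_sym_eq_piAntidiag, Finset.card_map, Finset.sym_univ, Finset.card_univ,
    Sym.card_sym_eq_choose, Fintype.card_fin, add_right_comm, add_tsub_cancel_right,
    Nat.choose_symm_add]

open PowerSeries in
lemma coeff_one_sub_X_pow {R : Type*} [CommRing R] (n k : ℕ) :
    coeff k ((1 - X : R⟦X⟧) ^ n) = (-1) ^ k * n.choose k := by
  have hrescale : (1 - X : R⟦X⟧) ^ n =
      rescale (-1 : R) (((1 + Polynomial.X : Polynomial R) ^ n : Polynomial R) : R⟦X⟧) := by
    simp [sub_eq_add_neg]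
  rw [hrescale, coeff_rescale, Polynomial.coeff_coe, Polynomial.coeff_one_add_X_pow]

variable {N d : ℕ} {v : Fin (d + 1) → Pt N}

open PowerSeries in
lemma deltaVec_eq_coeff (P : Set (Pt N)) (i : ℕ) :
    deltaVec P d i = coeff i ((1 - X : ℤ⟦X⟧) ^ (d + 1) * mk fun n => (ehr P n : ℤ)) := by
  simp only [deltaVec, coeff_mul, Finset.Nat.sum_antidiagonal_eq_sum_range_succ_mk, coeff_mk,
    coeff_one_sub_X_pow]

/-- The degree-`k` part of `Box(S)` for the simplex with vertex list `v`. -/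
def boxSlice (v : Fin (d + 1) → Pt N) (k : ℕ) : Set (Pt N) := {x | (x, (k : ℝ)) ∈ boxSimplex v}

lemma finite_boxSlice (k : ℕ) : (boxSlice v k).Finite := by
  have hbdd : Bornology.IsBounded (convexHull ℝ (Set.range v)) :=
    isBounded_convexHull.2 (Set.finite_range v).isBounded
  refine (latPts_finite_of_isBounded (hbdd.smul₀ (k : ℝ))).subset fun x hx => ?_
  exact (mem_latPts_dil_iff (convex_convexHull ℝ _) (Set.range_nonempty v).convexHull).2
    (boxSimplex_subset_coneLat hx)

lemma mem_latPts_dil_convexHull_range_iff (hv : ∀ i, IsLat (v i)) {n : ℕ} {x : Pt N} :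
    x ∈ latPts (dil n (convexHull ℝ (Set.range v))) ↔
      ∃ kl ∈ antidiagonal n, ∃ y ∈ boxSlice v kl.1,
        ∃ a : Fin (d + 1) → ℕ, a ∈ Finset.piAntidiag Finset.univ kl.2 ∧
          y + ∑ i, (a i : ℝ) • v i = x := by
  rw [mem_latPts_dil_iff (convex_convexHull ℝ _) (Set.range_nonempty v).convexHull]
  constructor
  · intro hx
    obtain ⟨⟨y, t⟩, hq, a, hqa⟩ := exists_boxSimplex_add_eq_of_mem_coneLat hv hx
    obtain ⟨k, rfl : t = k⟩ := exists_nat_snd_eq_of_mem_coneLat (boxSimplex_subset_coneLat hq)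
    simp only [Prod.ext_iff, Prod.fst_add, Prod.snd_add, coneComb_fst, coneComb_snd] at hqa
    refine ⟨(k, ∑ i, a i), mem_antidiagonal.2 (by exact_mod_cast hqa.2.symm), y, hq, a,
      by simp, hqa.1.symm⟩
  · rintro ⟨⟨k, l⟩, hkl, y, hy, a, ha, rfl⟩
    have hdeg : (n : ℝ) = k + ∑ i, (a i : ℝ) := by
      rw [← mem_antidiagonal.1 hkl, ← (Finset.mem_piAntidiag.1 ha).1]
      push_cast
      rfl
    have hsum : (y + ∑ i, (a i : ℝ) • v i, (n : ℝ)) = (y, (k : ℝ)) + coneComb v fun i => a i :=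
      Prod.ext (by simp [coneComb_fst]) (by simp [coneComb_snd, hdeg])
    rw [hsum]
    exact add_mem_coneLat (boxSimplex_subset_coneLat hy) (coneComb_natCast_mem_coneLat hv a)

lemma boxSlice_add_sum_smul_injective (hind : AffineIndependent ℝ v) {k k' : ℕ} {y y' : Pt N}
    (hy : y ∈ boxSlice v k) (hy' : y' ∈ boxSlice v k') {a a' : Fin (d + 1) → ℕ}
    (hdeg : k + ∑ i, a i = k' + ∑ i, a' i)
    (h : y + ∑ i, (a i : ℝ) • v i = y' + ∑ i, (a' i : ℝ) • v i) : k = k' ∧ y = y' ∧ a = a' := by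
  obtain ⟨hq, ha⟩ := boxSimplex_add_coneComb_injective hind hy hy' (a := a) (a' := a') <|
    Prod.ext (by simpa [coneComb_fst] using h) (by simpa [coneComb_snd] using mod_cast hdeg)
  exact ⟨by simpa using congrArg Prod.snd hq, congrArg Prod.fst hq, ha⟩

lemma ehr_convexHull_range (hv : ∀ i, IsLat (v i)) (hind : AffineIndependent ℝ v) (n : ℕ) :
    ehr (convexHull ℝ (Set.range v)) n =
      ∑ kl ∈ antidiagonal n, (boxSlice v kl.1).ncard * (d + kl.2).choose d := by
  let T : Finset (Σ _ : ℕ × ℕ, Pt N × (Fin (d + 1) → ℕ)) := (antidiagonal n).sigma fun kl =>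
    (finite_boxSlice (v := v) kl.1).toFinset ×ˢ Finset.piAntidiag Finset.univ kl.2
  let F : (Σ _ : ℕ × ℕ, Pt N × (Fin (d + 1) → ℕ)) → Pt N := fun t =>
    t.2.1 + ∑ i, (t.2.2 i : ℝ) • v i
  have himage : latPts (dil n (convexHull ℝ (Set.range v))) = F '' T := by
    ext x
    simp [mem_latPts_dil_convexHull_range_iff hv, T, F, and_assoc]
  have hinj : Set.InjOn F T := by
    rintro ⟨⟨k, l⟩, y, a⟩ ht ⟨⟨k', l'⟩, y', a'⟩ ht' heq
    simp only [T, Finset.coe_sigma, Set.mem_sigma_iff, Finset.mem_coe, Finset.mem_product,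
      Set.Finite.mem_toFinset, mem_antidiagonal, Finset.mem_piAntidiag] at ht ht'
    obtain ⟨hkl, hy, ha, -⟩ := ht
    obtain ⟨hkl', hy', ha', -⟩ := ht'
    obtain ⟨rfl, rfl, rfl⟩ := boxSlice_add_sum_smul_injective hind hy hy' (by lia) heq
    obtain rfl : l = l' := by lia
    rfl
  rw [ehr, himage, hinj.ncard_image, Set.ncard_coe_finset, Finset.card_sigma]
  simp only [Finset.card_product, card_piAntidiag_univ_fin,
    Set.ncard_eq_toFinset_card _ (finite_boxSlice _)]

open PowerSeries in
lemma deltaVec_convexHull_range (hv : ∀ i, IsLat (v i)) (hind : AffineIndependent ℝ v) (i : ℕ) :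
    deltaVec (convexHull ℝ (Set.range v)) d i = (boxSlice v i).ncard := by
  have hseries : (mk fun n => (ehr (convexHull ℝ (Set.range v)) n : ℤ)) =
      (mk fun k => ((boxSlice v k).ncard : ℤ)) * mk fun l => ((d + l).choose d : ℤ) := by
    ext n
    simp [coeff_mul, ehr_convexHull_range hv hind]
  rw [deltaVec_eq_coeff, hseries, mul_comm, mul_assoc, mk_add_choose_mul_one_sub_pow_eq_one,
    mul_one, coeff_mk]

lemma deltaVec_convexHull_range_ne_zero_iff (hv : ∀ i, IsLat (v i))
    (hind : AffineIndependent ℝ v) (i : ℕ) :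
    deltaVec (convexHull ℝ (Set.range v)) d i ≠ 0 ↔ ∃ p ∈ boxSimplex v, p.2 = i := by
  rw [deltaVec_convexHull_range hv hind, Nat.cast_ne_zero, ← Nat.pos_iff_ne_zero,
    Set.ncard_pos (finite_boxSlice i)]
  refine ⟨fun ⟨x, hx⟩ => ⟨_, hx, rfl⟩, ?_⟩
  rintro ⟨⟨x, _⟩, hx, rfl⟩
  exact ⟨x, hx⟩

end Ehrhart

section SimplexPdj

variable {m j : ℕ}

/-- The point `e₁ + ⋯ + e_j + t·e_{m+1}` of `ℝ^{m+1}`, for `j ≤ m`. For `t = j` it is the last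
vertex of `P(m + 1, j)`, and for `t = 1` it becomes a hole of `P(m + 1, j)` in degree `j`. -/
def prefixSum (m j : ℕ) (t : ℝ) : Pt (m + 1) :=
  Fin.snoc (fun i : Fin m => if (i : ℕ) < j then 1 else 0) t

/-- The vertices of `P(m + 1, j)`, for `j ≤ m`, in the order `0`, `e₁, …, e_m`,
`e₁ + ⋯ + e_j + j·e_{m+1}`. -/
def vertex (m j : ℕ) : Fin (m + 2) → Pt (m + 1) :=
  Fin.cons 0 (Fin.snoc (fun i : Fin m => Pi.single i.castSucc 1) (prefixSum m j j))

@[simp]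
lemma prefixSum_castSucc (t : ℝ) (i : Fin m) :
    prefixSum m j t i.castSucc = if (i : ℕ) < j then 1 else 0 := by
  simp [prefixSum]

@[simp]
lemma prefixSum_last (t : ℝ) : prefixSum m j t (Fin.last m) = t := by simp [prefixSum]

@[simp]
lemma vertex_zero : vertex m j 0 = 0 := rfl

@[simp]
lemma vertex_succ_castSucc (i : Fin m) : vertex m j i.castSucc.succ = Pi.single i.castSucc 1 := by
  simp [vertex]

@[simp]
lemma vertex_last : vertex m j (Fin.last (m + 1)) = prefixSum m j j := by
  simp [vertex, ← Fin.succ_last]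

lemma forall_fin_add_two_iff {p : Fin (m + 2) → Prop} :
    (∀ e, p e) ↔ p 0 ∧ (∀ i : Fin m, p i.castSucc.succ) ∧ p (Fin.last (m + 1)) := by
  rw [Fin.forall_fin_succ, Fin.forall_fin_succ', Fin.succ_last]

lemma range_vertex (hjm : j ≤ m) : Set.range (vertex m j) = Vdj (m + 1) j := by
  have hunit : Set.range (fun i : Fin m => (Pi.single i.castSucc 1 : Pt (m + 1))) =
      {x | ∃ k : Fin (m + 1), (k : ℕ) < m ∧ x = fun l => if l = k then (1 : ℝ) else 0} := by
    ext x
    simp [Fin.exists_fin_succ', funext_iff, Pi.single_apply, eq_comm]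
  have hapex : prefixSum m j j = fun k : Fin (m + 1) =>
      (if (k : ℕ) + 1 ≤ j then (1 : ℝ) else 0) + if (k : ℕ) = m then (j : ℝ) else 0 := by
    ext k
    cases k using Fin.lastCases with
    | last => simp [hjm.not_gt]
    | cast i => simp [i.isLt.ne]
  rw [vertex, Fin.range_cons, Fin.range_snoc, hunit, hapex, Vdj, Nat.add_sub_cancel,
    Set.singleton_union, Set.union_singleton, Set.insert_comm]

lemma isLat_prefixSum (n : ℕ) : IsLat (prefixSum m j n) := by
  intro k
  cases k using Fin.lastCases with
  | last => exact ⟨n, by simp⟩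
  | cast i => exact ⟨if (i : ℕ) < j then 1 else 0, by simp⟩

lemma isLat_vertex (e : Fin (m + 2)) : IsLat (vertex m j e) := by
  revert e
  refine forall_fin_add_two_iff.2 ⟨fun _ => ⟨0, by simp⟩, fun i k => ?_, ?_⟩
  · exact ⟨if k = i.castSucc then 1 else 0, by simp [Pi.single_apply]⟩
  · simpa using isLat_prefixSum j

lemma coneComb_vertex_fst_last (c : Fin (m + 2) → ℝ) :
    (coneComb (vertex m j) c).1 (Fin.last m) = j * c (Fin.last (m + 1)) := by
  rw [coneComb_fst, Fin.sum_univ_succ, Fin.sum_univ_castSucc]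
  simp [mul_comm]

lemma coneComb_vertex_fst_castSucc (c : Fin (m + 2) → ℝ) (i : Fin m) :
    (coneComb (vertex m j) c).1 i.castSucc =
      c i.castSucc.succ + if (i : ℕ) < j then c (Fin.last (m + 1)) else 0 := by
  rw [coneComb_fst, Fin.sum_univ_succ, Fin.sum_univ_castSucc]
  simp [Pi.single_apply]

lemma coneComb_vertex_snd (c : Fin (m + 2) → ℝ) :
    (coneComb (vertex m j) c).2 = c 0 + ∑ i : Fin m, c i.castSucc.succ + c (Fin.last (m + 1)) := by
  rw [coneComb_snd, Fin.sum_univ_succ, Fin.sum_univ_castSucc]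
  simp [add_assoc]

lemma last_nonneg_of_mem_convexHull_range_vertex {x : Pt (m + 1)}
    (hx : x ∈ convexHull ℝ (Set.range (vertex m j))) : 0 ≤ x (Fin.last m) := by
  obtain ⟨c, hc, hcx⟩ := exists_coneComb_eq_of_mem_convexHull hx
  have hlast : x (Fin.last m) = j * c (Fin.last (m + 1)) := by
    rw [← coneComb_vertex_fst_last, hcx]
  exact hlast ▸ mul_nonneg j.cast_nonneg (hc _)

lemma affineIndependent_vertex (hj : 0 < j) : AffineIndependent ℝ (vertex m j) := by
  rw [affineIndependent_iff_injective_coneComb, injective_iff_map_eq_zero]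
  intro c hc
  have hlast : c (Fin.last (m + 1)) = 0 := by
    simpa [hj.ne', hc] using (coneComb_vertex_fst_last (j := j) c).symm
  have hmid (i : Fin m) : c i.castSucc.succ = 0 := by
    simpa [hlast, hc] using (coneComb_vertex_fst_castSucc (j := j) c i).symm
  have hzero : c 0 = 0 := by
    simpa [hlast, hmid, hc] using (coneComb_vertex_snd (j := j) c).symm
  exact funext (forall_fin_add_two_iff.2 ⟨hzero, hmid, hlast⟩)

lemma eq_fract_neg_of_add_eq_intCast {r f : ℝ} (hr : 0 ≤ r ∧ r < 1) {z : ℤ} (h : r + f = z) :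
    r = Int.fract (-f) :=
  (Int.fract_eq_iff.2 ⟨hr.1, hr.2, -z, by push_cast; linarith⟩).symm

lemma sum_ite_val_lt (hjm : j ≤ m) (g : ℝ) :
    (∑ i : Fin m, if (i : ℕ) < j then g else 0) = j * g := by
  simp [← Finset.sum_filter, Fin.card_filter_val_lt, hjm]

lemma coeff_castSucc_succ_of_coneComb_vertex_mem_liftedLattice {r : Fin (m + 2) → ℝ}
    (hr : ∀ e, 0 ≤ r e ∧ r e < 1) (hlat : coneComb (vertex m j) r ∈ liftedLattice (m + 1))
    (i : Fin m) :
    r i.castSucc.succ = if (i : ℕ) < j then Int.fract (-r (Fin.last (m + 1))) else 0 := by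
  obtain ⟨z, hz⟩ := (mem_liftedLattice.1 hlat).1 i.castSucc
  rw [coneComb_vertex_fst_castSucc] at hz
  have hfract := eq_fract_neg_of_add_eq_intCast (hr _) hz
  split_ifs at hfract ⊢
  · exact hfract
  · simpa using hfract

lemma coneComb_vertex_snd_of_mem_liftedLattice (hjm : j ≤ m) {r : Fin (m + 2) → ℝ}
    (hr : ∀ e, 0 ≤ r e ∧ r e < 1) (hlat : coneComb (vertex m j) r ∈ liftedLattice (m + 1)) :
    (coneComb (vertex m j) r).2 =
      (j + 1) * Int.fract (-r (Fin.last (m + 1))) + r (Fin.last (m + 1)) := by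
  have hmid := coeff_castSucc_succ_of_coneComb_vertex_mem_liftedLattice hr hlat
  obtain ⟨hfst, z, hz⟩ := mem_liftedLattice.1 hlat
  obtain ⟨y, hy⟩ := hfst (Fin.last m)
  rw [coneComb_vertex_snd] at hz ⊢
  rw [coneComb_vertex_fst_last] at hy
  simp only [hmid, sum_ite_val_lt hjm] at hz ⊢
  have hfloor := Int.floor_add_fract (-r (Fin.last (m + 1)))
  have hzero : r 0 = Int.fract (-r (Fin.last (m + 1))) := by
    refine eq_fract_neg_of_add_eq_intCast (z := z + y + j * ⌊-r (Fin.last (m + 1))⌋) (hr 0) ?_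
    push_cast
    linear_combination hz + hy - (j : ℝ) * hfloor
  rw [hzero]
  ring

lemma exists_height_of_mem_boxSimplex_vertex (hj : 0 < j) (hjm : j ≤ m) {p : Pt (m + 1) × ℝ}
    (hp : p ∈ boxSimplex (vertex m j)) :
    ∃ h < j, p.1 (Fin.last m) = h ∧ p.2 = if h = 0 then 0 else (j + 1 - h : ℝ) := by
  obtain ⟨h, hh⟩ := exists_nat_apply_eq_of_mem_coneLat
    (fun x hx => last_nonneg_of_mem_convexHull_range_vertex hx) (boxSimplex_subset_coneLat hp)
  obtain ⟨⟨r, hr, rfl⟩, hlat⟩ := mem_boxSimplex_iff.1 hp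
  have hjpos : (0 : ℝ) < j := Nat.cast_pos.2 hj
  have hlast : r (Fin.last (m + 1)) = h / j := by
    rw [eq_div_iff hjpos.ne', mul_comm, ← coneComb_vertex_fst_last, hh]
  have hlt : (h / j : ℝ) < 1 := hlast ▸ (hr _).2
  refine ⟨h, by rwa [div_lt_one hjpos, Nat.cast_lt] at hlt, hh, ?_⟩
  rw [coneComb_vertex_snd_of_mem_liftedLattice hjm hr hlat, hlast]
  split_ifs with hzero
  · simp [hzero]
  · have hfract : Int.fract (h / j : ℝ) = h / j := Int.fract_eq_self.2 ⟨by positivity, hlt⟩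
    rw [Int.fract_neg (by rw [hfract]; positivity), hfract]
    field_simp
    ring

lemma boxSimplex_vertex_snd_le (hj : 0 < j) (hjm : j ≤ m) {p : Pt (m + 1) × ℝ}
    (hp : p ∈ boxSimplex (vertex m j)) : p.2 ≤ j := by
  obtain ⟨h, -, -, hdeg⟩ := exists_height_of_mem_boxSimplex_vertex hj hjm hp
  rw [hdeg]
  split_ifs with hzero
  · exact j.cast_nonneg
  · have : (1 : ℝ) ≤ h := Nat.one_le_cast.2 (Nat.one_le_iff_ne_zero.2 hzero)
    linarith

lemma boxSimplex_vertex_snd_ne_one (hj : 0 < j) (hjm : j ≤ m) {p : Pt (m + 1) × ℝ}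
    (hp : p ∈ boxSimplex (vertex m j)) : p.2 ≠ 1 := by
  obtain ⟨h, hhj, -, hdeg⟩ := exists_height_of_mem_boxSimplex_vertex hj hjm hp
  rw [hdeg]
  split_ifs with hzero
  · exact zero_ne_one
  · have : (h : ℝ) < j := Nat.cast_lt.2 hhj
    linarith

lemma le_snd_of_mem_coneLat_vertex_of_last_eq_one (hj : 1 < j) (hjm : j ≤ m)
    {p : Pt (m + 1) × ℝ} (hp : p ∈ coneLat (convexHull ℝ (Set.range (vertex m j))))
    (hlast : p.1 (Fin.last m) = 1) : j ≤ p.2 := by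
  obtain ⟨q, hq, a, rfl⟩ := exists_boxSimplex_add_eq_of_mem_coneLat isLat_vertex hp
  obtain ⟨h, hhj, hheight, hdeg⟩ := exists_height_of_mem_boxSimplex_vertex (by lia) hjm hq
  rw [Prod.fst_add, Pi.add_apply, hheight, coneComb_vertex_fst_last] at hlast
  obtain rfl : h = 1 := by
    have hsum : h + j * a (Fin.last (m + 1)) = 1 := by exact_mod_cast hlast
    rcases Nat.eq_zero_or_pos (a (Fin.last (m + 1))) with ha | ha
    · simpa [ha] using hsum
    · have := Nat.le_mul_of_pos_right j ha
      lia
  rw [Prod.snd_add, hdeg, coneComb_snd]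
  have : (0 : ℝ) ≤ ∑ e, (a e : ℝ) := by positivity
  simpa using this

lemma prefixSum_one_mem_boxSimplex_vertex (hj : 1 < j) (hjm : j ≤ m) :
    (prefixSum m j 1, (j : ℝ)) ∈ boxSimplex (vertex m j) := by
  have hjpos : (0 : ℝ) < j := Nat.cast_pos.2 (by lia)
  have hinv : 0 < (j : ℝ)⁻¹ := inv_pos.2 hjpos
  have hinv' : (j : ℝ)⁻¹ < 1 := inv_lt_one_of_one_lt₀ (Nat.one_lt_cast.2 hj)
  let r : Fin (m + 2) → ℝ := Fin.cons (1 - (j : ℝ)⁻¹)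
    (Fin.snoc (fun i : Fin m => if (i : ℕ) < j then 1 - (j : ℝ)⁻¹ else 0) (j : ℝ)⁻¹)
  have hzero : r 0 = 1 - (j : ℝ)⁻¹ := rfl
  have hmid (i : Fin m) : r i.castSucc.succ = if (i : ℕ) < j then 1 - (j : ℝ)⁻¹ else 0 := by
    simp [r]
  have hlast : r (Fin.last (m + 1)) = (j : ℝ)⁻¹ := by simp [r, ← Fin.succ_last]
  have hr : ∀ e, 0 ≤ r e ∧ r e < 1 := by
    refine forall_fin_add_two_iff.2 ⟨?_, fun i => ?_, ?_⟩
    · rw [hzero]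
      constructor <;> linarith
    · rw [hmid]
      split_ifs <;> constructor <;> linarith
    · rw [hlast]
      exact ⟨hinv.le, hinv'⟩
  refine mem_boxSimplex_iff.2 ⟨⟨r, hr, Prod.ext (funext fun k => ?_) ?_⟩, ?_⟩
  · cases k using Fin.lastCases with
    | last => simp [coneComb_vertex_fst_last, hlast, hjpos.ne']
    | cast i =>
      rw [coneComb_vertex_fst_castSucc, hmid, hlast]
      split_ifs with hi <;> simp [hi]
  · rw [coneComb_vertex_snd, hzero, hlast]
    simp only [hmid, sum_ite_val_lt hjm]
    field_simp
    ring
  · exact mem_liftedLattice.2 ⟨by simpa using isLat_prefixSum 1, j, by simp⟩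

end SimplexPdj

section Invariants

variable {m j : ℕ}

lemma zero_mem_convexHull_range_vertex : 0 ∈ convexHull ℝ (Set.range (vertex m j)) :=
  subset_convexHull ℝ _ ⟨0, vertex_zero⟩

lemma splitsAbove_convexHull_range_vertex (hj : 0 < j) (hjm : j ≤ m) :
    SplitsAbove (convexHull ℝ (Set.range (vertex m j))) j :=
  splitsAbove_of_forall_boxSimplex_snd_le isLat_vertex
    fun _ hp => boxSimplex_vertex_snd_le hj hjm hp

lemma hasIDP_dil_convexHull_range_vertex (hj : 0 < j) (hjm : j ≤ m) {n : ℕ} (hn : j ≤ n) :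
    HasIDP (dil n (convexHull ℝ (Set.range (vertex m j)))) :=
  (splitsAbove_convexHull_range_vertex hj hjm).hasIDP_dil (convex_convexHull ℝ _)
    ⟨0, zero_mem_convexHull_range_vertex⟩ hn

lemma not_veryAmple_dil_convexHull_range_vertex (hj : 1 < j) (hjm : j ≤ m) {k : ℕ} (hk₀ : 0 < k)
    (hk : k < j) : ¬ VeryAmple (dil k (convexHull ℝ (Set.range (vertex m j)))) :=
  not_veryAmple_dil_of_apply_eq_one (convex_convexHull ℝ _) zero_mem_convexHull_range_vertex
    (fun _ hx => last_nonneg_of_mem_convexHull_range_vertex hx)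
    (fun _ hp => le_snd_of_mem_coneLat_vertex_of_last_eq_one hj hjm hp)
    (boxSimplex_subset_coneLat (prefixSum_one_mem_boxSimplex_vertex hj hjm)) (prefixSum_last 1)
    hk₀ hk

lemma isGreatest_snd_minHilbertBasis_vertex (hj : 1 < j) (hjm : j ≤ m)
    {H : Set (Pt (m + 1) × ℝ)}
    (hH : IsMinHilbertBasis (convexHull ℝ (Set.range (vertex m j))) H) :
    IsGreatest {t : ℝ | ∃ p ∈ H, p.2 = t} j := by
  constructor
  · have hhole := isAddIndecomposable_coneLat_of_apply_eq_one
      (fun _ hx => last_nonneg_of_mem_convexHull_range_vertex hx)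
      (fun _ hp => le_snd_of_mem_coneLat_vertex_of_last_eq_one hj hjm hp)
      (boxSimplex_subset_coneLat (prefixSum_one_mem_boxSimplex_vertex hj hjm)) (prefixSum_last 1)
    have hne : (prefixSum m j 1, (j : ℝ)) ≠ 0 := fun h =>
      (Nat.cast_ne_zero (R := ℝ)).2 (by lia) (congrArg Prod.snd h)
    exact ⟨_, hH.mem_of_isAddIndecomposable hhole hne, rfl⟩
  · rintro _ ⟨p, hp, rfl⟩
    exact (splitsAbove_convexHull_range_vertex (by lia) hjm).snd_le_of_mem_minHilbertBasis
      hj.le (convex_convexHull ℝ _) ⟨0, zero_mem_convexHull_range_vertex⟩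
      (isBounded_convexHull.2 (Set.finite_range _).isBounded) hH hp

lemma isGreatest_snd_boxP_vertex (hj : 1 < j) (hjm : j ≤ m) :
    IsGreatest {t : ℝ | ∃ p ∈ boxP (convexHull ℝ (Set.range (vertex m j))) (m + 1), p.2 = t} j := by
  have hpos : 0 < j := by lia
  rw [boxP_convexHull_range (affineIndependent_vertex hpos)
    (latPts_convexHull_range_of_forall_boxSimplex_snd_ne_one isLat_vertex
      fun _ hp => boxSimplex_vertex_snd_ne_one hpos hjm hp)]
  constructor
  · exact ⟨_, ⟨prefixSum_one_mem_boxSimplex_vertex hj hjm,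
      notMem_genMonoid_of_apply_eq_one (convex_convexHull ℝ _)
        ⟨0, zero_mem_convexHull_range_vertex⟩
        (fun _ hx => last_nonneg_of_mem_convexHull_range_vertex hx)
        (fun _ hp => le_snd_of_mem_coneLat_vertex_of_last_eq_one hj hjm hp) hj
        (prefixSum_last 1)⟩, rfl⟩
  · rintro _ ⟨p, hp, rfl⟩
    exact boxSimplex_vertex_snd_le hpos hjm hp.1

lemma isGreatest_deltaVec_vertex_ne_zero (hj : 1 < j) (hjm : j ≤ m) :
    IsGreatest
      {i : ℕ | i ≤ m + 1 ∧ deltaVec (convexHull ℝ (Set.range (vertex m j))) (m + 1) i ≠ 0} j := by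
  have hpos : 0 < j := by lia
  simp only [deltaVec_convexHull_range_ne_zero_iff isLat_vertex (affineIndependent_vertex hpos)]
  constructor
  · exact ⟨by lia, _, prefixSum_one_mem_boxSimplex_vertex hj hjm, rfl⟩
  · rintro i ⟨-, p, hp, hi⟩
    exact Nat.cast_le.1 (hi ▸ boxSimplex_vertex_snd_le hpos hjm hp)

end Invariants

lemma HasIDP.veryAmple {N : ℕ} {P : Set (Pt N)} (h : HasIDP P) : VeryAmple P := ⟨1, h⟩

lemma isLeast_pos_and_of_forall_lt_not {p : ℕ → Prop} {n : ℕ} (hn : 0 < n) (hp : p n)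
    (hlt : ∀ k, 0 < k → k < n → ¬ p k) : IsLeast {k | 0 < k ∧ p k} n :=
  ⟨⟨hn, hp⟩, fun k hk => not_lt.1 fun hkn => hlt k hk.1 hkn hk.2⟩

/-- for `1 ≤ k < j` the dilation `k·P(d,j)` is not very ample, and all
six invariants `μ_va, μ_midp, μ_idp, μ_Hilb, μ_hole, μ_Ehr` of `P(d,j)` equal `j`. -/
theorem all_invariants_eq_j (d j : ℕ) (hd : 3 ≤ d) (hj2 : 2 ≤ j) (hjd : j ≤ d - 1) :
    (∀ k, 1 ≤ k → k < j → ¬ VeryAmple (dil k (Pdj d j))) ∧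
    IsLeast {k : ℕ | 0 < k ∧ VeryAmple (dil k (Pdj d j))} j ∧
    IsLeast {k : ℕ | 0 < k ∧ HasIDP (dil k (Pdj d j))} j ∧
    IsLeast {k : ℕ | 0 < k ∧ ∀ n, k ≤ n → HasIDP (dil n (Pdj d j))} j ∧
    (∀ H, IsMinHilbertBasis (Pdj d j) H →
      IsGreatest {t : ℝ | ∃ p ∈ H, p.2 = t} (j : ℝ)) ∧
    IsGreatest {t : ℝ | ∃ p ∈ boxP (Pdj d j) d, p.2 = t} (j : ℝ) ∧
    IsGreatest {i : ℕ | i ≤ d ∧ deltaVec (Pdj d j) d i ≠ 0} j := by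
  obtain ⟨m, rfl⟩ := Nat.exists_eq_add_of_le' (show 1 ≤ d by lia)
  have hjm : j ≤ m := hjd
  rw [Pdj, ← range_vertex hjm]
  have hnotVA := fun k => not_veryAmple_dil_convexHull_range_vertex (k := k) hj2 hjm
  have hIDP := fun n => hasIDP_dil_convexHull_range_vertex (n := n) (zero_lt_two.trans_le hj2) hjm
  refine ⟨hnotVA, ?_, ?_, ?_, fun H hH => isGreatest_snd_minHilbertBasis_vertex hj2 hjm hH,
    isGreatest_snd_boxP_vertex hj2 hjm, isGreatest_deltaVec_vertex_ne_zero hj2 hjm⟩ <;>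
    refine isLeast_pos_and_of_forall_lt_not (zero_lt_two.trans_le hj2) ?_ fun k hk₀ hk h => ?_
  · exact (hIDP j le_rfl).veryAmple
  · exact hnotVA k hk₀ hk h
  · exact hIDP j le_rfl
  · exact hnotVA k hk₀ hk h.veryAmple
  · exact hIDP
  · exact hnotVA k hk₀ hk (h k le_rfl).veryAmple
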